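/- arXiv:2404.13891 — 7 statements merged into one kernel-verified Lean document; each statement's English description precedes it below -/
import Mathlib

section
/- Fix n ≥ 1, losses ℓ¹, …, ℓᵀ ∈ ℝ^n and positive weights w¹, …, wᵀ. For each η > 0 define recursively: x̃¹_η = 0 ∈ ℝ^n; x^t_η = N(x̃^t_η); r^t_η = ⟨ℓ^t, x^t_η⟩·𝟏 − ℓ^t; and x̃^{t+1}_η = [x̃^t_η + η w^t r^t_η]⁺ (the OMD update with regularizer (1/2)‖·‖₂² on ℝ^n_{≥0} applied to the modified loss −w^t r^t_η). Then for every t ∈ {1, …, T+1} and every η > 0 one has x̃^t_η = η · x̃^t_1 and x^t_η = x^t_1; that is, the produced strategies are independent of the step size η and coincide with the strategies of WCFR+, defined by R⁰ = 0, R^t = [R^{t−1} + w^t r^t]⁺, x^{t+1} = N(R^t). -/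
open Finset
open scoped Classical

/-- Euclidean dot product on `Fin n → ℝ`. -/
def dotp {n : ℕ} (a b : Fin n → ℝ) : ℝ := ∑ i, a i * b i

/-- Componentwise positive part. -/
def clipPos {n : ℕ} (v : Fin n → ℝ) : Fin n → ℝ := fun i => max (v i) 0

/-- Normalization `N(v) = v / ‖v‖₁`, with `N(0)` the uniform distribution. -/
noncomputable def nmz {n : ℕ} (v : Fin n → ℝ) : Fin n → ℝ :=
  if v = 0 then (fun _ => (1 : ℝ) / n) else fun i => v i / ∑ j, |v j|

theorem nmz_smul_aux {n : ℕ} (c : ℝ) (hc : 0 < c) (v : Fin n → ℝ) :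
    nmz (c • v) = nmz v := by
  unfold nmz
  by_cases hv : v = 0
  · simp [hv]
  · have h : c • v ≠ 0 := smul_ne_zero hc.ne' hv
    rw [if_neg h, if_neg hv]
    funext i
    simp only [Pi.smul_apply, smul_eq_mul, abs_mul, abs_of_pos hc, ← Finset.mul_sum]
    exact mul_div_mul_left _ _ hc.ne'

/-- OMD with regularizer `(1/2)‖·‖₂²` on the nonnegative orthant, fed the weighted
modified losses `−wᵗ rᵗ`, produces strategies independent of the step size `η > 0`,
and these coincide with the strategies of WCFR+. Here `xt η` is the OMD iterate `x̃ᵗ_η`,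
`xs η` the normalized strategy `xᵗ_η`, `r η` the instantaneous regret `rᵗ_η`,
and `R`, `xW`, `rW` are the WCFR+ quantities. -/
theorem stmt1 (n T : ℕ) (hn : 0 < n) (hT : 1 ≤ T)
    (ℓ : ℕ → Fin n → ℝ) (w : ℕ → ℝ) (hw : ∀ t ∈ Icc 1 T, 0 < w t)
    (xt xs r : ℝ → ℕ → Fin n → ℝ)
    (hxt1 : ∀ η : ℝ, 0 < η → xt η 1 = 0)
    (hxs : ∀ η : ℝ, 0 < η → ∀ t ∈ Icc 1 (T + 1), xs η t = nmz (xt η t))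
    (hr : ∀ η : ℝ, 0 < η → ∀ t ∈ Icc 1 T,
      r η t = fun i => dotp (ℓ t) (xs η t) - ℓ t i)
    (hrec : ∀ η : ℝ, 0 < η → ∀ t ∈ Icc 1 T,
      xt η (t + 1) = clipPos (fun i => xt η t i + η * w t * r η t i))
    (R xW rW : ℕ → Fin n → ℝ)
    (hR0 : R 0 = 0)
    (hxW : ∀ t ∈ Icc 1 (T + 1), xW t = nmz (R (t - 1)))
    (hrW : ∀ t ∈ Icc 1 T, rW t = fun i => dotp (ℓ t) (xW t) - ℓ t i)
    (hRrec : ∀ t ∈ Icc 1 T, R t = clipPos (fun i => R (t - 1) i + w t * rW t i)) :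
    ∀ t ∈ Icc 1 (T + 1), ∀ η : ℝ, 0 < η →
      xt η t = η • xt 1 t ∧ xs η t = xs 1 t ∧ xs η t = xW t := by
  have key : ∀ k : ℕ, k ≤ T → ∀ η : ℝ, 0 < η → xt η (k + 1) = η • R k := by
    intro k
    induction k with
    | zero =>
      intro _ η hη
      rw [hxt1 η hη, hR0, smul_zero]
    | succ k ih =>
      intro hk η hη
      have h1 : k + 1 ∈ Icc 1 T := Finset.mem_Icc.mpr ⟨by omega, hk⟩
      have h2 : k + 1 ∈ Icc 1 (T + 1) := Finset.mem_Icc.mpr ⟨by omega, by omega⟩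
      have e := ih (by omega) η hη
      have hx : xs η (k + 1) = xW (k + 1) := by
        rw [hxs η hη _ h2, hxW _ h2, e, nmz_smul_aux η hη, Nat.add_sub_cancel]
      have hrr : r η (k + 1) = rW (k + 1) := by
        rw [hr η hη _ h1, hrW _ h1, hx]
      rw [hrec η hη _ h1, hRrec _ h1, hrr, e, Nat.add_sub_cancel]
      funext i
      simp only [clipPos, Pi.smul_apply, smul_eq_mul]
      rw [mul_max_of_nonneg _ _ hη.le, mul_zero]
      congr 1
      ring
  have main : ∀ t ∈ Icc 1 (T + 1), ∀ η : ℝ, 0 < η →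
      xt η t = η • R (t - 1) ∧ xs η t = xW t := by
    intro t ht η hη
    have ht' := Finset.mem_Icc.mp ht
    have e := key (t - 1) (by omega) η hη
    rw [Nat.sub_add_cancel ht'.1] at e
    refine ⟨e, ?_⟩
    rw [hxs η hη _ ht, hxW _ ht, e, nmz_smul_aux η hη]
  intro t ht η hη
  obtain ⟨a, b⟩ := main t ht η hη
  obtain ⟨c, d⟩ := main t ht 1 one_pos
  refine ⟨?_, b.trans d.symm, b⟩
  rw [a, c, one_smul]
end

section
/- Fix n ≥ 1, losses ℓ¹, …, ℓᵀ ∈ ℝ^n and positive weights w¹, …, wᵀ. For each η > 0 define recursively: z⁰_η = 0 ∈ ℝ^n; x¹_η = the uniform distribution; for t ≥ 1, r^t_η = ⟨ℓ^t, x^t_η⟩·𝟏 − ℓ^t; z^t_η = [z^{t−1}_η + η w^t r^t_η]⁺; the prediction v^{t+1}_η = ⟨ℓ^t, x^t_η⟩·𝟏 − ℓ^t; x̃^{t+1}_η = [z^t_η + η w^{t+1} v^{t+1}_η]⁺ (the optimistic OMD update with regularizer (1/2)‖·‖₂² on ℝ^n_{≥0}, modified losses −w^t r^t_η and predictions −w^{t+1}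 v^{t+1}_η); and x^{t+1}_η = N(x̃^{t+1}_η). Then for every t and every η > 0 one has z^t_η = η · z^t_1, x̃^{t+1}_η = η · x̃^{t+1}_1, and x^{t+1}_η = x^{t+1}_1; that is, the strategies are independent of η and coincide with those of PWCFR+, defined by R⁰ = 0, R^t = [R^{t−1} + w^t r^t]⁺, R̃^{t+1} = [R^t + w^{t+1} v^{t+1}]⁺, x^{t+1} = N(R̃^{t+1}). -/
open Finset
open scoped Classical

theorem clipPos_scale {n : ℕ} (η : ℝ) (h : 0 < η) (a b : Fin n → ℝ) (c : ℝ) :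
    clipPos (fun i => (η • a) i + η * c * b i) = η • clipPos (fun i => a i + c * b i) := by
  funext i
  simp only [clipPos, Pi.smul_apply, smul_eq_mul]
  rw [mul_max_of_nonneg _ _ h.le, mul_zero]
  congr 1
  ring

theorem nmz_scale {n : ℕ} (η : ℝ) (h : 0 < η) (a : Fin n → ℝ) :
    nmz (η • a) = nmz a := by
  unfold nmz
  by_cases ha : a = 0
  · simp [ha]
  · have h2 : η • a ≠ 0 := smul_ne_zero h.ne' ha
    rw [if_neg ha, if_neg h2]
    funext i
    simp only [Pi.smul_apply, smul_eq_mul, abs_mul, abs_of_pos h]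
    rw [← Finset.mul_sum, mul_div_mul_left _ _ h.ne']

/-- Optimistic OMD with regularizer `(1/2)‖·‖₂²` on the nonnegative orthant, fed the
weighted modified losses `−wᵗ rᵗ` and predictions `−wᵗ⁺¹ vᵗ⁺¹` (with predicted loss
`mᵗ⁺¹ = ℓᵗ`), produces strategies independent of the step size `η > 0`, and these
coincide with the strategies of PWCFR+. Here `z η`, `xt η`, `xs η`, `r η`, `v η` are the
optimistic-OMD quantities `zᵗ_η`, `x̃ᵗ_η`, `xᵗ_η`, `rᵗ_η`, `vᵗ_η`, and `R`, `Rt`, `xP`,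
`rP`, `vP` are the PWCFR+ quantities. -/
theorem stmt2 (n T : ℕ) (hn : 0 < n) (hT : 1 ≤ T)
    (ℓ : ℕ → Fin n → ℝ) (w : ℕ → ℝ) (hw : ∀ t ∈ Icc 1 (T + 1), 0 < w t)
    (z xt xs r v : ℝ → ℕ → Fin n → ℝ)
    (hz0 : ∀ η : ℝ, 0 < η → z η 0 = 0)
    (hxs1 : ∀ η : ℝ, 0 < η → xs η 1 = fun _ => (1 : ℝ) / n)
    (hr : ∀ η : ℝ, 0 < η → ∀ t ∈ Icc 1 T,
      r η t = fun i => dotp (ℓ t) (xs η t) - ℓ t i)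
    (hzrec : ∀ η : ℝ, 0 < η → ∀ t ∈ Icc 1 T,
      z η t = clipPos (fun i => z η (t - 1) i + η * w t * r η t i))
    (hv : ∀ η : ℝ, 0 < η → ∀ t ∈ Icc 1 T,
      v η (t + 1) = fun i => dotp (ℓ t) (xs η t) - ℓ t i)
    (hxtrec : ∀ η : ℝ, 0 < η → ∀ t ∈ Icc 1 T,
      xt η (t + 1) = clipPos (fun i => z η t i + η * w (t + 1) * v η (t + 1) i))
    (hxsrec : ∀ η : ℝ, 0 < η → ∀ t ∈ Icc 1 T, xs η (t + 1) = nmz (xt η (t + 1)))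
    (R Rt xP rP vP : ℕ → Fin n → ℝ)
    (hR0 : R 0 = 0)
    (hxP1 : xP 1 = fun _ => (1 : ℝ) / n)
    (hrP : ∀ t ∈ Icc 1 T, rP t = fun i => dotp (ℓ t) (xP t) - ℓ t i)
    (hRrec : ∀ t ∈ Icc 1 T, R t = clipPos (fun i => R (t - 1) i + w t * rP t i))
    (hvP : ∀ t ∈ Icc 1 T, vP (t + 1) = fun i => dotp (ℓ t) (xP t) - ℓ t i)
    (hRt : ∀ t ∈ Icc 1 T,
      Rt (t + 1) = clipPos (fun i => R t i + w (t + 1) * vP (t + 1) i))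
    (hxPrec : ∀ t ∈ Icc 1 T, xP (t + 1) = nmz (Rt (t + 1))) :
    ∀ η : ℝ, 0 < η →
      (∀ t ∈ Icc 1 T, z η t = η • z 1 t) ∧
      (∀ t ∈ Icc 1 T,
        xt η (t + 1) = η • xt 1 (t + 1) ∧
        xs η (t + 1) = xs 1 (t + 1) ∧
        xs η (t + 1) = xP (t + 1)) := by
  have key : ∀ η : ℝ, 0 < η → ∀ t, t ≤ T → z η t = η • R t ∧ xs η (t + 1) = xP (t + 1) ∧
      (1 ≤ t → xt η (t + 1) = η • Rt (t + 1)) := by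
    intro η h t
    induction t with
    | zero =>
      intro _
      refine ⟨by rw [hz0 η h, hR0, smul_zero], by rw [zero_add, hxs1 η h, hxP1], ?_⟩
      intro h0
      omega
    | succ k ih =>
      intro hk
      obtain ⟨h1, h2, -⟩ := ih (by omega)
      have hm : k + 1 ∈ Icc 1 T := Finset.mem_Icc.2 ⟨by omega, hk⟩
      have e1 : z η (k + 1) = η • R (k + 1) := by
        rw [hzrec η h _ hm, hRrec _ hm, ← clipPos_scale η h, hr η h _ hm, hrP _ hm, h2,
          Nat.add_sub_cancel, h1]
      have e2 : xt η (k + 1 + 1) = η • Rt (k + 1 + 1) := by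
        rw [hxtrec η h _ hm, hRt _ hm, ← clipPos_scale η h, hv η h _ hm, hvP _ hm, h2, e1]
      exact ⟨e1, by rw [hxsrec η h _ hm, hxPrec _ hm, e2, nmz_scale η h], fun _ => e2⟩
  intro η h
  refine ⟨fun t ht => ?_, fun t ht => ?_⟩
  · have := (Finset.mem_Icc.1 ht).2
    rw [(key η h t this).1, (key 1 one_pos t this).1, one_smul]
  · obtain ⟨h1, h2⟩ := Finset.mem_Icc.1 ht
    obtain ⟨-, a2, a3⟩ := key η h t h2
    obtain ⟨-, b2, b3⟩ := key 1 one_pos t h2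
    exact ⟨by rw [a3 h1, b3 h1, one_smul], by rw [a2, b2], a2⟩
end

section
/- Let T ≥ 1, let r¹, …, rᵀ ∈ ℝ^n, let w¹, …, wᵀ > 0 and τ¹, …, τᵀ > 0 be such that the sequence t ↦ τ^t/w^t is non-increasing, and let η > 0. Define x̃¹ = 0 ∈ ℝ^n and x̃^{t+1} = [x̃^t + η w^t r^t]⁺ for 1 ≤ t ≤ T. Then for every x̃′ in the standard simplex Δ^n: Σ_{t=1}^T (τ^t/w^t) ⟨−w^t r^t, x̃^t − x̃′⟩ ≤ (1/(2η))·(τ¹/w¹) + (η/2) Σ_{t=1}^T (τ^t/w^t) ‖w^t r^t‖₂². -/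
open Finset

theorem omd_coord (p q g η : ℝ) (hq : 0 ≤ q) (hη : 0 < η) :
    -g * (p - q) ≤ 1 / (2 * η) * ((p - q) ^ 2 - (max (p + η * g) 0 - q) ^ 2) + η / 2 * g ^ 2 := by
  have h1 : (max (p + η * g) 0 - q) ^ 2 ≤ (p + η * g - q) ^ 2 := by
    rcases le_total (p + η * g) 0 with h | h
    · rw [max_eq_right h]; nlinarith
    · rw [max_eq_left h]
  have h2 : 1 / (2 * η) * ((p - q) ^ 2 - (p + η * g - q) ^ 2) + η / 2 * g ^ 2 = -g * (p - q) := by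
    field_simp
    ring
  have h3 : 0 < 1 / (2 * η) := by positivity
  nlinarith

/-- The central telescoping weighted regret bound in the proof of Theorem 3:
for the OMD iterates `x̃¹ = 0`, `x̃ᵗ⁺¹ = [x̃ᵗ + η wᵗ rᵗ]⁺` with `τᵗ/wᵗ` non-increasing,
every `x̃′` in the standard simplex satisfies
`Σ_t (τᵗ/wᵗ)⟨−wᵗrᵗ, x̃ᵗ − x̃′⟩ ≤ (1/(2η))(τ¹/w¹) + (η/2) Σ_t (τᵗ/wᵗ)‖wᵗrᵗ‖₂²`. -/
theorem stmt9 (n T : ℕ) (hT : 1 ≤ T)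
    (r : ℕ → Fin n → ℝ) (w τ : ℕ → ℝ)
    (hw : ∀ t ∈ Icc 1 T, 0 < w t) (hτ : ∀ t ∈ Icc 1 T, 0 < τ t)
    (hmono : ∀ t, 1 ≤ t → t < T → τ (t + 1) / w (t + 1) ≤ τ t / w t)
    (η : ℝ) (hη : 0 < η)
    (xt : ℕ → Fin n → ℝ) (hxt1 : xt 1 = 0)
    (hrec : ∀ t ∈ Icc 1 T, xt (t + 1) = clipPos (fun i => xt t i + η * w t * r t i)) :
    ∀ x' ∈ stdSimplex ℝ (Fin n),
      ∑ t ∈ Icc 1 T, (τ t / w t) * dotp (fun i => -(w t * r t i)) (xt t - x') ≤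
        (1 / (2 * η)) * (τ 1 / w 1)
          + (η / 2) * ∑ t ∈ Icc 1 T, (τ t / w t) * ∑ i, (w t * r t i) ^ 2 := by
  intro x' hx'
  set a : ℕ → ℝ := fun t => τ t / w t with ha
  set D : ℕ → ℝ := fun t => ∑ i, (xt t i - x' i) ^ 2 with hD
  have hDn : ∀ t, 0 ≤ D t := fun t => Finset.sum_nonneg fun i _ => sq_nonneg _
  have hc : 0 < 1 / (2 * η) := by positivity
  have hapos : ∀ t ∈ Icc 1 T, 0 < a t := fun t ht => div_pos (hτ t ht) (hw t ht)
  have hstep : ∀ t ∈ Icc 1 T, dotp (fun i => -(w t * r t i)) (xt t - x') ≤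
      1 / (2 * η) * (D t - D (t + 1)) + η / 2 * ∑ i, (w t * r t i) ^ 2 := by
    intro t ht
    simp only [hD, dotp, hrec t ht, clipPos]
    rw [← Finset.sum_sub_distrib, Finset.mul_sum, Finset.mul_sum, ← Finset.sum_add_distrib]
    refine Finset.sum_le_sum fun i _ => ?_
    have := omd_coord (xt t i) (x' i) (w t * r t i) η (hx'.1 i) hη
    simpa [mul_assoc] using this
  have hD1 : D 1 ≤ 1 := by
    simp only [hD, hxt1]
    rw [← hx'.2]
    refine Finset.sum_le_sum fun i _ => ?_
    have h0 := hx'.1 i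
    have h1 : x' i ≤ 1 := by
      rw [← hx'.2]
      exact Finset.single_le_sum (fun j _ => hx'.1 j) (Finset.mem_univ i)
    simp only [Pi.zero_apply]
    nlinarith
  have key : ∀ m, 1 ≤ m → m ≤ T →
      ∑ t ∈ Icc 1 m, a t * dotp (fun i => -(w t * r t i)) (xt t - x') ≤
        1 / (2 * η) * (a 1 * D 1 - a m * D (m + 1))
          + (η / 2) * ∑ t ∈ Icc 1 m, a t * ∑ i, (w t * r t i) ^ 2 := by
    intro m hm
    induction m, hm using Nat.le_induction with
    | base =>
      intro _
      have h1 : 1 ∈ Icc 1 T := Finset.mem_Icc.2 ⟨le_rfl, hT⟩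
      have := mul_le_mul_of_nonneg_left (hstep 1 h1) (hapos 1 h1).le
      simp only [Finset.Icc_self, Finset.sum_singleton]
      linarith
    | succ m hm ih =>
      intro hmT
      have h1 : m + 1 ∈ Icc 1 T := Finset.mem_Icc.2 ⟨by omega, hmT⟩
      have h2 := mul_le_mul_of_nonneg_left (hstep (m + 1) h1) (hapos _ h1).le
      have h3 := ih (by omega)
      have h4 : a (m + 1) * D (m + 1) ≤ a m * D (m + 1) :=
        mul_le_mul_of_nonneg_right (hmono m hm (by omega)) (hDn _)
      have h5 := mul_le_mul_of_nonneg_left h4 hc.le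
      rw [Finset.sum_Icc_succ_top (by omega), Finset.sum_Icc_succ_top (by omega)]
      linarith
  have hk := key T hT le_rfl
  have hT1 := hapos T (Finset.mem_Icc.2 ⟨hT, le_rfl⟩)
  have h1 := hapos 1 (Finset.mem_Icc.2 ⟨le_rfl, hT⟩)
  have h6 : a 1 * D 1 - a T * D (T + 1) ≤ a 1 := by
    have := mul_nonneg hT1.le (hDn (T + 1))
    nlinarith
  have h7 := mul_le_mul_of_nonneg_left h6 hc.le
  exact hk.trans (by linarith)
end

section
/- Let T ≥ 1, let r¹, …, rᵀ ∈ ℝ^n and v¹, …, vᵀ ∈ ℝ^n, let w¹, …, wᵀ > 0 and τ¹, …, τᵀ > 0 be such that the sequence t ↦ τ^t/w^t is non-increasing, and let η > 0. Define z⁰ = 0 ∈ ℝ^n and, for 1 ≤ t ≤ T, z^t = [z^{t−1} + η w^t r^t]⁺ and x̃^t = [z^{t−1} + η w^t v^t]⁺. Then for every x̃′ in the standard simplex Δ^n: Σ_{t=1}^T (τ^t/w^t) ⟨−w^t r^t, x̃^t − x̃′⟩ ≤ η Σ_{t=1}^T (τ^t/w^t) ‖w^t r^t − w^t v^t‖₂²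 + (1/(2η))·(τ¹/w¹). -/
open Finset

theorem coord_step (z g m y : ℝ) (hy : 0 ≤ y) :
    -g * (max (z + m) 0 - y) ≤ (g - m) ^ 2 + (z - y) ^ 2 / 2 - (max (z + g) 0 - y) ^ 2 / 2 := by
  have h1 : 0 ≤ (y - max (z + g) 0) * (max (z + g) 0 - z - g) := by
    rcases max_cases (z + g) 0 with ⟨h, h'⟩ | ⟨h, h'⟩ <;> rw [h]
    · simp
    · apply mul_nonneg <;> linarith
  have h2 : 0 ≤ (max (z + g) 0 - max (z + m) 0) * (max (z + m) 0 - z - m) := by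
    have := le_max_right (z + g) 0
    rcases max_cases (z + m) 0 with ⟨h, h'⟩ | ⟨h, h'⟩ <;> rw [h]
    · simp
    · apply mul_nonneg <;> linarith
  generalize max (z + g) 0 = a at *
  generalize max (z + m) 0 = x at *
  nlinarith [sq_nonneg (g - m - (a - x)), sq_nonneg (x - z), sq_nonneg (g - m)]

/-- The central telescoping weighted regret bound in the proof of Theorem 4:
for the optimistic OMD iterates `z⁰ = 0`, `zᵗ = [zᵗ⁻¹ + η wᵗ rᵗ]⁺`,
`x̃ᵗ = [zᵗ⁻¹ + η wᵗ vᵗ]⁺` with `τᵗ/wᵗ` non-increasing, every `x̃′` in the standard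
simplex satisfies
`Σ_t (τᵗ/wᵗ)⟨−wᵗrᵗ, x̃ᵗ − x̃′⟩ ≤ η Σ_t (τᵗ/wᵗ)‖wᵗrᵗ − wᵗvᵗ‖₂² + (1/(2η))(τ¹/w¹)`. -/
theorem stmt10 (n T : ℕ) (hT : 1 ≤ T)
    (r v : ℕ → Fin n → ℝ) (w τ : ℕ → ℝ)
    (hw : ∀ t ∈ Icc 1 T, 0 < w t) (hτ : ∀ t ∈ Icc 1 T, 0 < τ t)
    (hmono : ∀ t, 1 ≤ t → t < T → τ (t + 1) / w (t + 1) ≤ τ t / w t)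
    (η : ℝ) (hη : 0 < η)
    (z xt : ℕ → Fin n → ℝ) (hz0 : z 0 = 0)
    (hzrec : ∀ t ∈ Icc 1 T, z t = clipPos (fun i => z (t - 1) i + η * w t * r t i))
    (hxtrec : ∀ t ∈ Icc 1 T, xt t = clipPos (fun i => z (t - 1) i + η * w t * v t i)) :
    ∀ x' ∈ stdSimplex ℝ (Fin n),
      ∑ t ∈ Icc 1 T, (τ t / w t) * dotp (fun i => -(w t * r t i)) (xt t - x') ≤
        η * ∑ t ∈ Icc 1 T, (τ t / w t) * ∑ i, (w t * r t i - w t * v t i) ^ 2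
          + (1 / (2 * η)) * (τ 1 / w 1) := by
  intro x' hx'
  obtain ⟨hx0, hx1⟩ := hx'
  have hstep : ∀ t ∈ Icc 1 T, dotp (fun i => -(w t * r t i)) (xt t - x') ≤
      η * ∑ i, (w t * r t i - w t * v t i) ^ 2
        + (1 / (2 * η)) * (∑ i, (z (t - 1) i - x' i) ^ 2 - ∑ i, (z t i - x' i) ^ 2) := by
    intro t ht
    rw [dotp, ← Finset.sum_sub_distrib, Finset.mul_sum, Finset.mul_sum, ← Finset.sum_add_distrib]
    refine Finset.sum_le_sum fun i _ => ?_
    have h := coord_step (z (t - 1) i) (η * w t * r t i) (η * w t * v t i) (x' i) (hx0 i)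
    rw [hzrec t ht, hxtrec t ht]
    simp only [clipPos, Pi.sub_apply]
    refine le_of_mul_le_mul_left ?_ hη
    refine le_trans (le_of_eq ?_) (h.trans (le_of_eq ?_))
    · ring
    · field_simp
      ring
  have hc : ∀ t ∈ Icc 1 T, 0 ≤ τ t / w t := fun t ht => (div_pos (hτ t ht) (hw t ht)).le
  have hη2 : 0 ≤ 1 / (2 * η) := by positivity
  have hD : ∀ t, 0 ≤ ∑ i, (z t i - x' i) ^ 2 := fun t =>
    Finset.sum_nonneg fun i _ => sq_nonneg _
  have hD0 : ∑ i, (z 0 i - x' i) ^ 2 ≤ 1 := by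
    rw [← hx1]
    refine Finset.sum_le_sum fun i _ => ?_
    have h1 : x' i ≤ 1 := by
      rw [← hx1]
      exact Finset.single_le_sum (fun j _ => hx0 j) (Finset.mem_univ i)
    have h0 := hx0 i
    simp only [hz0, Pi.zero_apply]
    nlinarith
  have key : ∀ k, 1 ≤ k → k ≤ T →
      ∑ t ∈ Icc 1 k, (τ t / w t) * dotp (fun i => -(w t * r t i)) (xt t - x')
        + (1 / (2 * η)) * ((τ k / w k) * ∑ i, (z k i - x' i) ^ 2) ≤
      η * ∑ t ∈ Icc 1 k, (τ t / w t) * ∑ i, (w t * r t i - w t * v t i) ^ 2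
          + (1 / (2 * η)) * (τ 1 / w 1) := by
    intro k hk
    induction k, hk using Nat.le_induction with
    | base =>
      intro h
      have hm : 1 ∈ Icc 1 T := by simp [h]
      have h1 := mul_le_mul_of_nonneg_left (hstep 1 hm) (hc 1 hm)
      have h2 := mul_le_mul_of_nonneg_left (mul_le_mul_of_nonneg_left hD0 (hc 1 hm)) hη2
      simp only [Finset.Icc_self, Finset.sum_singleton, Nat.sub_self] at *
      linarith
    | succ k hk ih =>
      intro h
      have hm : k + 1 ∈ Icc 1 T := by simp [h]
      have h1 := mul_le_mul_of_nonneg_left (hstep (k + 1) hm) (hc _ hm)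
      have h2 := mul_le_mul_of_nonneg_left
        (mul_le_mul_of_nonneg_right (hmono k hk (by omega)) (hD k)) hη2
      have h3 := ih (by omega)
      rw [Finset.sum_Icc_succ_top (by omega), Finset.sum_Icc_succ_top (by omega)]
      simp only [Nat.add_sub_cancel] at h1
      linarith
  have h := key T hT le_rfl
  have h2 := mul_nonneg hη2 (mul_nonneg (hc T (by simp [hT])) (hD T))
  linarith
end

section
/- Let T ≥ 1, let ℓ¹, …, ℓᵀ ∈ ℝ^n, and let w¹, …, wᵀ > 0 and τ¹, …, τᵀ > 0 be such that the sequence t ↦ τ^t/w^t is non-increasing. Run WCFR+: set R⁰ = 0 ∈ ℝ^n and, for 1 ≤ t ≤ T, x^t = N(R^{t−1}), r^t = ⟨ℓ^t, x^t⟩·𝟏 − ℓ^t, and R^t = [R^{t−1} + w^t r^t]⁺. Then the total weighted regret satisfies max_{x′ ∈ Δ^n} Σ_{t=1}^T τ^t ⟨ℓ^t, x^t − x′⟩ ≤ √( (τ¹/w¹) · Σ_{t=1}^T τ^t w^t ‖r^t‖₂² ). -/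
open Finset
open scoped Classical

lemma orth_aux {n : ℕ} (v l : Fin n → ℝ) (hv : ∀ i, 0 ≤ v i) :
    ∑ i, v i * (dotp l (nmz v) - l i) = 0 := by
  by_cases h : v = 0
  · simp [h]
  · have hs : ∑ j, |v j| = ∑ j, v j := Finset.sum_congr rfl fun j _ => abs_of_nonneg (hv j)
    have hne : ∑ j, v j ≠ 0 := by
      intro h0
      apply h
      funext i
      exact (Finset.sum_eq_zero_iff_of_nonneg (fun i _ => hv i)).1 h0 i (Finset.mem_univ i)
    have hd : dotp l (nmz v) = (∑ i, v i * l i) / ∑ j, v j := by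
      unfold dotp nmz
      rw [if_neg h, hs, Finset.sum_div]
      refine Finset.sum_congr rfl fun i _ => ?_
      ring
    simp only [mul_sub, Finset.sum_sub_distrib, ← Finset.sum_mul]
    rw [hd]
    field_simp
    ring

lemma step_aux {n : ℕ} (v r y : Fin n → ℝ) (w : ℝ)
    (hy : ∀ i, 0 ≤ y i) (ho : ∑ i, v i * r i = 0) :
    (∑ i, clipPos (fun i => v i + w * r i) i ^ 2 ≤ ∑ i, v i ^ 2 + w ^ 2 * ∑ i, r i ^ 2) ∧
    (∑ i, v i * y i + w * ∑ i, r i * y i ≤ ∑ i, clipPos (fun i => v i + w * r i) i * y i) := by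
  constructor
  · have h1 : ∑ i, clipPos (fun i => v i + w * r i) i ^ 2 ≤ ∑ i, (v i + w * r i) ^ 2 := by
      refine Finset.sum_le_sum fun i _ => ?_
      simp only [clipPos]
      rcases max_cases (v i + w * r i) 0 with h | h
      · rw [h.1]
      · rw [h.1]; nlinarith [sq_nonneg (v i + w * r i)]
    have h2 : ∑ i, (v i + w * r i) ^ 2
        = ∑ i, v i ^ 2 + 2 * w * ∑ i, v i * r i + w ^ 2 * ∑ i, r i ^ 2 := by
      rw [Finset.mul_sum, Finset.mul_sum, ← Finset.sum_add_distrib, ← Finset.sum_add_distrib]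
      refine Finset.sum_congr rfl fun i _ => ?_
      ring
    rw [h2, ho] at h1
    linarith
  · rw [Finset.mul_sum, ← Finset.sum_add_distrib]
    refine Finset.sum_le_sum fun i _ => ?_
    have := mul_le_mul_of_nonneg_right (le_max_left (v i + w * r i) 0) (hy i)
    simp only [clipPos]
    linarith

lemma gap_aux {n : ℕ} (v y : Fin n → ℝ) (c : ℝ) (hy : y ∈ stdSimplex ℝ (Fin n)) :
    0 ≤ ∑ i, v i ^ 2 + c ^ 2 - 2 * c * ∑ i, v i * y i := by
  have h1 : ∑ i, y i ^ 2 ≤ 1 := by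
    rw [← hy.2]
    refine Finset.sum_le_sum fun i _ => ?_
    have h2 : y i ≤ 1 := by
      rw [← hy.2]
      exact Finset.single_le_sum (fun j _ => hy.1 j) (Finset.mem_univ i)
    nlinarith [hy.1 i]
  have h3 : 0 ≤ ∑ i, (v i - c * y i) ^ 2 := Finset.sum_nonneg fun i _ => sq_nonneg _
  have h4 : ∑ i, (v i - c * y i) ^ 2
      = ∑ i, v i ^ 2 - 2 * c * ∑ i, v i * y i + c ^ 2 * ∑ i, y i ^ 2 := by
    rw [Finset.mul_sum, Finset.mul_sum, ← Finset.sum_sub_distrib, ← Finset.sum_add_distrib]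
    refine Finset.sum_congr rfl fun i _ => ?_
    ring
  nlinarith [sq_nonneg c]

/-- The per-decision-node weighted counterfactual regret bound of WCFR+ (from the proof
of Theorem 3): running `R⁰ = 0`, `xᵗ = N(Rᵗ⁻¹)`, `rᵗ = ⟨ℓᵗ, xᵗ⟩·𝟏 − ℓᵗ`,
`Rᵗ = [Rᵗ⁻¹ + wᵗrᵗ]⁺` with `τᵗ/wᵗ` non-increasing gives
`max_{x′∈Δⁿ} Σ_t τᵗ⟨ℓᵗ, xᵗ − x′⟩ ≤ √((τ¹/w¹)·Σ_t τᵗwᵗ‖rᵗ‖₂²)`. -/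
theorem stmt11 (n T : ℕ) (hn : 0 < n) (hT : 1 ≤ T)
    (ℓ : ℕ → Fin n → ℝ) (w τ : ℕ → ℝ)
    (hw : ∀ t ∈ Icc 1 T, 0 < w t) (hτ : ∀ t ∈ Icc 1 T, 0 < τ t)
    (hmono : ∀ t, 1 ≤ t → t < T → τ (t + 1) / w (t + 1) ≤ τ t / w t)
    (R x r : ℕ → Fin n → ℝ)
    (hR0 : R 0 = 0)
    (hx : ∀ t ∈ Icc 1 T, x t = nmz (R (t - 1)))
    (hr : ∀ t ∈ Icc 1 T, r t = fun i => dotp (ℓ t) (x t) - ℓ t i)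
    (hR : ∀ t ∈ Icc 1 T, R t = clipPos (fun i => R (t - 1) i + w t * r t i)) :
    ∀ x' ∈ stdSimplex ℝ (Fin n),
      ∑ t ∈ Icc 1 T, τ t * dotp (ℓ t) (x t - x') ≤
        Real.sqrt ((τ 1 / w 1) * ∑ t ∈ Icc 1 T, τ t * w t * ∑ i, (r t i) ^ 2) := by
  intro y hy
  have hRnn : ∀ t, t ≤ T → ∀ i, 0 ≤ R t i := by
    intro t ht i
    rcases Nat.eq_zero_or_pos t with h | h
    · subst h; simp [hR0]
    · rw [hR t (Finset.mem_Icc.2 ⟨h, ht⟩)]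
      exact le_max_right _ _
  have hreg : ∀ t ∈ Icc 1 T, dotp (ℓ t) (x t - y) = ∑ i, r t i * y i := by
    intro t ht
    rw [hr t ht]
    simp only [sub_mul, Finset.sum_sub_distrib, ← Finset.mul_sum]
    rw [hy.2]
    simp [dotp, mul_sub, Finset.sum_sub_distrib]
  have hstep : ∀ t, t + 1 ≤ T → ∀ c : ℝ, 0 ≤ c →
      2 * c * (τ (t+1) * dotp (ℓ (t+1)) (x (t+1) - y)) ≤
        τ (t+1) * w (t+1) * ∑ i, r (t+1) i ^ 2
        + τ (t+1) / w (t+1) * (∑ i, R t i ^ 2 + c ^ 2 - 2 * c * ∑ i, R t i * y i)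
        - τ (t+1) / w (t+1) *
          (∑ i, R (t+1) i ^ 2 + c ^ 2 - 2 * c * ∑ i, R (t+1) i * y i) := by
    intro t ht c hc
    have hm : t + 1 ∈ Icc 1 T := Finset.mem_Icc.2 ⟨by omega, ht⟩
    have ho : ∑ i, R t i * r (t+1) i = 0 := by
      rw [hr _ hm, hx _ hm]
      exact orth_aux (R t) _ (hRnn t (by omega))
    obtain ⟨h1, h2⟩ := step_aux (R t) (r (t+1)) y (w (t+1)) hy.1 ho
    have hRe : R (t+1) = clipPos (fun i => R t i + w (t+1) * r (t+1) i) := hR _ hm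
    rw [← hRe] at h1 h2
    rw [hreg _ hm]
    have hwp := hw _ hm
    have hap : 0 < τ (t+1) / w (t+1) := div_pos (hτ _ hm) hwp
    have hτe : τ (t+1) = τ (t+1) / w (t+1) * w (t+1) := by field_simp
    generalize τ (t+1) / w (t+1) = a at *
    rw [hτe]
    have h3 := mul_le_mul_of_nonneg_left h1 hap.le
    have h4 := mul_le_mul_of_nonneg_left h2 (mul_nonneg hap.le hc)
    nlinarith
  have hmain : ∀ c : ℝ, 0 ≤ c → ∀ t, 1 ≤ t → t ≤ T →
      2 * c * ∑ s ∈ Icc 1 t, τ s * dotp (ℓ s) (x s - y) ≤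
        ∑ s ∈ Icc 1 t, τ s * w s * ∑ i, (r s i) ^ 2 + τ 1 / w 1 * c ^ 2
        - τ t / w t * (∑ i, R t i ^ 2 + c ^ 2 - 2 * c * ∑ i, R t i * y i) := by
    intro c hc t h1
    induction t, h1 using Nat.le_induction with
    | base =>
      intro h
      have := hstep 0 h c hc
      simp [hR0] at this
      simp
      linarith
    | succ t h1 ih =>
      intro h
      have i1 := ih (by omega)
      have i2 := hstep t h c hc
      have i3 := mul_le_mul_of_nonneg_right (hmono t h1 (by omega)) (gap_aux (R t) y c hy)
      rw [Finset.sum_Icc_succ_top (by omega), Finset.sum_Icc_succ_top (by omega)]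
      linarith
  have h1m : 1 ∈ Icc 1 T := Finset.mem_Icc.2 ⟨le_refl _, hT⟩
  have hTm : T ∈ Icc 1 T := Finset.mem_Icc.2 ⟨hT, le_refl _⟩
  have ha : 0 < τ 1 / w 1 := div_pos (hτ _ h1m) (hw _ h1m)
  have haT : 0 < τ T / w T := div_pos (hτ _ hTm) (hw _ hTm)
  have hfin : ∀ c : ℝ, 0 ≤ c → 2 * c * ∑ s ∈ Icc 1 T, τ s * dotp (ℓ s) (x s - y) ≤
        ∑ s ∈ Icc 1 T, τ s * w s * ∑ i, (r s i) ^ 2 + τ 1 / w 1 * c ^ 2 := by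
    intro c hc
    have := hmain c hc T hT le_rfl
    have := mul_nonneg haT.le (gap_aux (R T) y c hy)
    linarith
  generalize ∑ s ∈ Icc 1 T, τ s * dotp (ℓ s) (x s - y) = A at *
  generalize ∑ s ∈ Icc 1 T, τ s * w s * ∑ i, (r s i) ^ 2 = B at *
  generalize τ 1 / w 1 = a at *
  rcases le_or_gt A 0 with hA | hA
  · exact hA.trans (Real.sqrt_nonneg _)
  · apply Real.le_sqrt_of_sq_le
    have h := mul_le_mul_of_nonneg_left (hfin (A / a) (div_pos hA ha).le) ha.le
    have e1 : a * (2 * (A / a) * A) = 2 * A ^ 2 := by field_simp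
    have e2 : a * (B + a * (A / a) ^ 2) = a * B + A ^ 2 := by field_simp
    rw [e1, e2] at h
    linarith
end

section
/- Let T ≥ 1, let ℓ¹, …, ℓᵀ ∈ ℝ^n, let v¹, …, vᵀ ∈ ℝ^n be arbitrary prediction vectors, and let w¹, …, wᵀ > 0 and τ¹, …, τᵀ > 0 be such that the sequence t ↦ τ^t/w^t is non-increasing. Run PWCFR+: set R⁰ = 0 ∈ ℝ^n and, for 1 ≤ t ≤ T, R̃^t = [R^{t−1} + w^t v^t]⁺, x^t = N(R̃^t), r^t = ⟨ℓ^t, x^t⟩·𝟏 − ℓ^t, and R^t = [R^{t−1} + w^t r^t]⁺. Then the total weighted regret satisfies max_{x′ ∈ Δ^n} Σ_{t=1}^T τ^t ⟨ℓ^t, x^t − x′⟩ ≤ √( 2·(τ¹/w¹) · Σ_{t=1}^T τ^t w^t ‖r^t − v^t‖₂² ). -/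
open Finset
open scoped Classical

lemma coord_ineq (a r v : ℝ) (ha : 0 ≤ a) :
    (max (a + r) 0) ^ 2 - a ^ 2 ≤ 2 * (r * max (a + v) 0) + (r - v) ^ 2 := by
  rcases le_total 0 (a + v) with h | h <;> rcases le_total 0 (a + r) with h' | h' <;>
    simp only [max_eq_left, max_eq_right, h, h']
  · nlinarith [sq_nonneg v]
  · nlinarith [sq_nonneg (a + r), sq_nonneg v]
  · nlinarith
  · nlinarith [sq_nonneg a, sq_nonneg (r - v)]

lemma clip_dot {n : ℕ} (u l : Fin n → ℝ) (hu : ∀ i, 0 ≤ u i) :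
    ∑ i, (dotp l (nmz u) - l i) * u i = 0 := by
  by_cases h : u = 0
  · simp [h]
  · have hs : ∑ j, |u j| = ∑ j, u j := Finset.sum_congr rfl fun j _ => abs_of_nonneg (hu j)
    have hne : ∑ j, u j ≠ 0 := by
      intro h0
      apply h
      funext i
      exact (Finset.sum_eq_zero_iff_of_nonneg (fun i _ => hu i)).1 h0 i (Finset.mem_univ i)
    have e : dotp l (nmz u) = (∑ i, l i * u i) / ∑ j, u j := by
      simp only [dotp, nmz, if_neg h, hs, Finset.sum_div, mul_div_assoc]
    simp only [sub_mul, Finset.sum_sub_distrib, ← Finset.mul_sum, e]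
    rw [div_mul_cancel₀ _ hne, sub_self]

/-- The per-decision-node weighted counterfactual regret bound of PWCFR+ (from the proof
of Theorem 4): running `R⁰ = 0`, `R̃ᵗ = [Rᵗ⁻¹ + wᵗvᵗ]⁺`, `xᵗ = N(R̃ᵗ)`,
`rᵗ = ⟨ℓᵗ, xᵗ⟩·𝟏 − ℓᵗ`, `Rᵗ = [Rᵗ⁻¹ + wᵗrᵗ]⁺` with `τᵗ/wᵗ` non-increasing gives
`max_{x′∈Δⁿ} Σ_t τᵗ⟨ℓᵗ, xᵗ − x′⟩ ≤ √(2(τ¹/w¹)·Σ_t τᵗwᵗ‖rᵗ − vᵗ‖₂²)`. -/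
theorem stmt12 (n T : ℕ) (hn : 0 < n) (hT : 1 ≤ T)
    (ℓ v : ℕ → Fin n → ℝ) (w τ : ℕ → ℝ)
    (hw : ∀ t ∈ Icc 1 T, 0 < w t) (hτ : ∀ t ∈ Icc 1 T, 0 < τ t)
    (hmono : ∀ t, 1 ≤ t → t < T → τ (t + 1) / w (t + 1) ≤ τ t / w t)
    (R Rt x r : ℕ → Fin n → ℝ)
    (hR0 : R 0 = 0)
    (hRt : ∀ t ∈ Icc 1 T, Rt t = clipPos (fun i => R (t - 1) i + w t * v t i))
    (hx : ∀ t ∈ Icc 1 T, x t = nmz (Rt t))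
    (hr : ∀ t ∈ Icc 1 T, r t = fun i => dotp (ℓ t) (x t) - ℓ t i)
    (hR : ∀ t ∈ Icc 1 T, R t = clipPos (fun i => R (t - 1) i + w t * r t i)) :
    ∀ x' ∈ stdSimplex ℝ (Fin n),
      ∑ t ∈ Icc 1 T, τ t * dotp (ℓ t) (x t - x') ≤
        Real.sqrt (2 * (τ 1 / w 1)
          * ∑ t ∈ Icc 1 T, τ t * w t * ∑ i, (r t i - v t i) ^ 2) := by
  intro x' hx'
  obtain ⟨hx0, hx1⟩ := hx'
  have hRnn : ∀ t ≤ T, ∀ i, 0 ≤ R t i := by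
    intro t ht i
    rcases Nat.eq_zero_or_pos t with h | h
    · subst h; simp [hR0]
    · rw [hR t (mem_Icc.2 ⟨h, ht⟩)]; exact le_max_right _ _
  have hreg : ∀ t ∈ Icc 1 T, w t * dotp (ℓ t) (x t - x') ≤
      ∑ i, R t i * x' i - ∑ i, R (t - 1) i * x' i := by
    intro t ht
    have e : w t * dotp (ℓ t) (x t - x') = ∑ i, (w t * r t i) * x' i := by
      have h1 : dotp (ℓ t) (x t - x') = dotp (ℓ t) (x t) - ∑ i, ℓ t i * x' i := by
        simp [dotp, mul_sub, Finset.sum_sub_distrib]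
      rw [h1, hr t ht]
      simp only [mul_assoc, ← Finset.mul_sum, sub_mul, Finset.sum_sub_distrib]
      rw [hx1, mul_one]
    rw [e, ← Finset.sum_sub_distrib]
    refine Finset.sum_le_sum fun i _ => ?_
    have h2 : R (t - 1) i + w t * r t i ≤ R t i := by
      rw [hR t ht]; exact le_max_left _ _
    nlinarith [hx0 i]
  have hstep : ∀ t ∈ Icc 1 T, ∑ i, R t i ^ 2 - ∑ i, R (t - 1) i ^ 2 ≤
      w t ^ 2 * ∑ i, (r t i - v t i) ^ 2 := by
    intro t ht
    have hz : ∑ i, r t i * Rt t i = 0 := by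
      rw [hr t ht, hx t ht]
      apply clip_dot
      intro i
      rw [hRt t ht]; exact le_max_right _ _
    have h3 : ∑ i, (R t i ^ 2 - R (t - 1) i ^ 2) ≤
        ∑ i, (2 * w t * (r t i * Rt t i) + w t ^ 2 * (r t i - v t i) ^ 2) := by
      refine Finset.sum_le_sum fun i _ => ?_
      have h4 := coord_ineq (R (t - 1) i) (w t * r t i) (w t * v t i)
        (hRnn (t - 1) (by have := (mem_Icc.1 ht).2; omega) i)
      have h5 : R t i = max (R (t - 1) i + w t * r t i) 0 := by rw [hR t ht]; rfl
      have h6 : Rt t i = max (R (t - 1) i + w t * v t i) 0 := by rw [hRt t ht]; rfl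
      rw [← h5, ← h6] at h4
      linarith
    rw [Finset.sum_sub_distrib, Finset.sum_add_distrib, ← Finset.mul_sum, ← Finset.mul_sum,
      hz] at h3
    linarith
  have hxsq : ∑ i, x' i ^ 2 ≤ 1 := by
    rw [← hx1]
    refine Finset.sum_le_sum fun i _ => ?_
    have : x' i ≤ 1 := by
      rw [← hx1]; exact Finset.single_le_sum (fun j _ => hx0 j) (Finset.mem_univ i)
    nlinarith [hx0 i]
  set D : ℕ → ℝ := fun t => ∑ i, (r t i - v t i) ^ 2 with hD
  set g : ℝ → ℕ → ℝ := fun η t =>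
    η / 2 * ∑ i, R t i ^ 2 + 1 / (2 * η) - ∑ i, R t i * x' i with hg
  have hgnn : ∀ η > 0, ∀ t, 0 ≤ g η t := by
    intro η hη t
    have h1 : ∑ i, R t i * x' i ≤ ∑ i, (η / 2 * R t i ^ 2 + 1 / (2 * η) * x' i ^ 2) := by
      refine Finset.sum_le_sum fun i _ => ?_
      have : η / 2 * R t i ^ 2 + 1 / (2 * η) * x' i ^ 2 - R t i * x' i
          = 1 / (2 * η) * (η * R t i - x' i) ^ 2 := by field_simp; ring
      have h2 : 0 ≤ 1 / (2 * η) * (η * R t i - x' i) ^ 2 := by positivity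
      linarith
    rw [Finset.sum_add_distrib, ← Finset.mul_sum, ← Finset.mul_sum] at h1
    have h2 : 1 / (2 * η) * ∑ i, x' i ^ 2 ≤ 1 / (2 * η) * 1 :=
      mul_le_mul_of_nonneg_left hxsq (by positivity)
    simp only [hg]
    linarith
  have hterm : ∀ η > 0, ∀ t ∈ Icc 1 T, τ t * dotp (ℓ t) (x t - x') ≤
      η / 2 * (τ t * w t * D t) - τ t / w t * (g η t - g η (t - 1)) := by
    intro η hη t ht
    have hwt := hw t ht
    have hτt := hτ t ht
    have h1 := hreg t ht
    have h2 := mul_le_mul_of_nonneg_left (hstep t ht) (by positivity : 0 ≤ η / 2)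
    have h3 : w t * dotp (ℓ t) (x t - x') ≤
        η / 2 * (w t ^ 2 * D t) - (g η t - g η (t - 1)) := by
      simp only [hg]; linarith
    have h4 := mul_le_mul_of_nonneg_left h3 (by positivity : 0 ≤ τ t / w t)
    have e1 : τ t / w t * (w t * dotp (ℓ t) (x t - x')) = τ t * dotp (ℓ t) (x t - x') := by
      field_simp
    have e2 : τ t / w t * (η / 2 * (w t ^ 2 * D t) - (g η t - g η (t - 1))) =
        η / 2 * (τ t * w t * D t) - τ t / w t * (g η t - g η (t - 1)) := by
      field_simp
    linarith
  have hind : ∀ η > 0, ∀ k, 1 ≤ k → k ≤ T →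
      ∑ t ∈ Icc 1 k, τ t * dotp (ℓ t) (x t - x') ≤
        η / 2 * ∑ t ∈ Icc 1 k, τ t * w t * D t + τ 1 / w 1 * (1 / (2 * η))
          - τ k / w k * g η k := by
    intro η hη k hk
    induction k, hk using Nat.le_induction with
    | base =>
      intro _
      have h1 := hterm η hη 1 (mem_Icc.2 ⟨le_rfl, hT⟩)
      have h0 : g η 0 = 1 / (2 * η) := by simp [hg, hR0]
      simp only [Icc_self, sum_singleton]
      rw [Nat.sub_self, h0] at h1
      linarith
    | succ k hk ih =>
      intro hkT
      have h1 := hterm η hη (k + 1) (mem_Icc.2 ⟨by omega, hkT⟩)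
      have h2 := ih (by omega)
      have h3 := mul_le_mul_of_nonneg_right (hmono k hk (by omega)) (hgnn η hη k)
      rw [Finset.sum_Icc_succ_top (by omega), Finset.sum_Icc_succ_top (by omega)]
      rw [Nat.add_sub_cancel] at h1
      linarith
  have h1T : 1 ∈ Icc 1 T := mem_Icc.2 ⟨le_rfl, hT⟩
  have hTT : T ∈ Icc 1 T := mem_Icc.2 ⟨hT, le_rfl⟩
  have hc : 0 < τ 1 / w 1 := div_pos (hτ 1 h1T) (hw 1 h1T)
  have hcT : 0 < τ T / w T := div_pos (hτ T hTT) (hw T hTT)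
  have hB : 0 ≤ ∑ t ∈ Icc 1 T, τ t * w t * D t :=
    Finset.sum_nonneg fun t ht => mul_nonneg (mul_pos (hτ t ht) (hw t ht)).le
      (Finset.sum_nonneg fun i _ => sq_nonneg _)
  set S := ∑ t ∈ Icc 1 T, τ t * dotp (ℓ t) (x t - x') with hS
  set B := ∑ t ∈ Icc 1 T, τ t * w t * D t with hBd
  set c := τ 1 / w 1 with hcd
  rcases le_or_gt S 0 with hS0 | hS0
  · exact hS0.trans (Real.sqrt_nonneg _)
  · apply Real.le_sqrt_of_sq_le
    have hη : 0 < c / S := div_pos hc hS0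
    have h1 := hind (c / S) hη T hT le_rfl
    have h2 := mul_nonneg hcT.le (hgnn _ hη T)
    have h3 : S ≤ c / S / 2 * B + c * (1 / (2 * (c / S))) := by linarith
    have e : c / S / 2 * B + c * (1 / (2 * (c / S))) = (c * B + S ^ 2) / (2 * S) := by
      field_simp
    rw [e, le_div_iff₀ (by positivity)] at h3
    nlinarith [mul_nonneg hc.le hB]
end

section
/- Consider a two-player zero-sum normal-form game with n × m payoff (loss) matrix A, where player 1 plays x ∈ Δ^n to minimize xᵀAy and player 2 plays y ∈ Δ^m to maximize it. Let w¹, …, wᵀ > 0 and τ¹, …, τᵀ > 0 be such that t ↦ τ^t/w^t is non-increasing. Suppose both players run WCFR+ simultaneously: R_x⁰ = 0 ∈ ℝ^n, R_y⁰ = 0 ∈ ℝ^m, and for 1 ≤ t ≤ T: x^t = N(R_x^{t−1}), y^t = N(R_y^{t−1}); ℓ_x^t = A y^t, ℓ_y^t = −Aᵀ x^t; r_x^t = ⟨ℓ_x^t, x^t⟩·𝟏 − ℓ_x^t, r_y^t = ⟨ℓ_y^t, y^t⟩·𝟏 − ℓ_y^t; R_x^t = [R_x^{t−1} + w^t r_x^t]⁺,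 R_y^t = [R_y^{t−1} + w^t r_y^t]⁺. Let x̄ = (Σ_t τ^t x^t)/(Σ_t τ^t) and ȳ = (Σ_t τ^t y^t)/(Σ_t τ^t). Then (x̄, ȳ) is an ε-Nash equilibrium with ε = ( √((τ¹/w¹) Σ_t τ^t w^t ‖r_x^t‖₂²) + √((τ¹/w¹) Σ_t τ^t w^t ‖r_y^t‖₂²) ) / (Σ_t τ^t), i.e. x̄ᵀAȳ − min_{x′∈Δ^n} x′ᵀAȳ ≤ ε and max_{y′∈Δ^m} x̄ᵀAy′ − x̄ᵀAȳ ≤ ε. -/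
open Finset Matrix
open scoped Classical

lemma nmz_simplex {n : ℕ} (hn : 0 < n) (v : Fin n → ℝ) (hv : ∀ i, 0 ≤ v i) :
    (∀ i, 0 ≤ nmz v i) ∧ ∑ i, nmz v i = 1 := by
  unfold nmz
  split_ifs with h
  · refine ⟨fun i => by positivity, ?_⟩
    have : (n : ℝ) ≠ 0 := by positivity
    simp [this]
  · have hs : (∑ j, |v j|) = ∑ j, v j := sum_congr rfl fun j _ => abs_of_nonneg (hv j)
    refine ⟨fun i => div_nonneg (hv i) (sum_nonneg fun j _ => abs_nonneg _), ?_⟩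
    rw [← sum_div, hs]
    apply div_self
    intro h0
    apply h
    funext i
    exact (sum_eq_zero_iff_of_nonneg (fun j _ => hv j)).1 h0 i (mem_univ i)

lemma nmz_scale_s13 {n : ℕ} (v : Fin n → ℝ) : ∀ i, v i = (∑ j, |v j|) * nmz v i := by
  intro i
  unfold nmz
  split_ifs with h
  · simp [h]
  · have : (∑ j, |v j|) ≠ 0 := by
      intro h0
      apply h
      funext i
      exact abs_eq_zero.1 ((sum_eq_zero_iff_of_nonneg (fun j _ => abs_nonneg (v j))).1 h0 i (mem_univ i))
    field_simp

lemma orth {n : ℕ} (hn : 0 < n) (v l : Fin n → ℝ) (hv : ∀ i, 0 ≤ v i) :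
    ∑ i, v i * (dotp l (nmz v) - l i) = 0 := by
  have h1 := (nmz_simplex hn v hv).2
  have : ∀ i, v i * (dotp l (nmz v) - l i)
      = (∑ j, |v j|) * (dotp l (nmz v) * nmz v i - l i * nmz v i) := by
    intro i
    conv_lhs => rw [nmz_scale_s13 v i]
    ring
  rw [sum_congr rfl fun i _ => this i, ← mul_sum, sum_sub_distrib, ← mul_sum, h1]
  simp [dotp]

lemma step_ineq {n : ℕ} (v r u : Fin n → ℝ) (w : ℝ) (hu : ∀ i, 0 ≤ u i)
    (ho : ∑ i, v i * r i = 0) :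
    ∑ i, (clipPos (fun i => v i + w * r i) i - u i) ^ 2 ≤
      ∑ i, (v i - u i) ^ 2 + w ^ 2 * ∑ i, r i ^ 2 - 2 * w * ∑ i, r i * u i := by
  have h1 : ∑ i, (clipPos (fun i => v i + w * r i) i - u i) ^ 2 ≤
      ∑ i, (v i + w * r i - u i) ^ 2 := by
    apply sum_le_sum
    intro i _
    have := hu i
    unfold clipPos
    rcases max_cases (v i + w * r i) 0 with ⟨h, h'⟩ | ⟨h, h'⟩
    · simp only [h]; exact le_rfl
    · simp only [h]; nlinarith
  have h2 : ∑ i, (v i + w * r i - u i) ^ 2 = ∑ i, (v i - u i) ^ 2 + w ^ 2 * ∑ i, r i ^ 2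
      - 2 * w * ∑ i, r i * u i + 2 * w * ∑ i, v i * r i := by
    simp only [mul_sum, ← sum_add_distrib, ← sum_sub_distrib]
    exact sum_congr rfl fun i _ => by ring
  rw [h2, ho] at h1
  linarith

lemma R_nonneg {n T : ℕ} (w : ℕ → ℝ) (R r : ℕ → Fin n → ℝ) (hR0 : R 0 = 0)
    (hR : ∀ t ∈ Icc 1 T, R t = clipPos (fun i => R (t - 1) i + w t * r t i)) :
    ∀ t ≤ T, ∀ i, 0 ≤ R t i := by
  intro t ht i
  rcases Nat.eq_zero_or_pos t with h | h
  · simp [h, hR0]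
  · rw [hR t (mem_Icc.2 ⟨h, ht⟩)]
    exact le_max_right _ _

lemma regret {n T : ℕ} (hn : 0 < n) (hT : 1 ≤ T) (w τ : ℕ → ℝ)
    (hw : ∀ t ∈ Icc 1 T, 0 < w t) (hτ : ∀ t ∈ Icc 1 T, 0 < τ t)
    (hmono : ∀ t, 1 ≤ t → t < T → τ (t + 1) / w (t + 1) ≤ τ t / w t)
    (R x r l : ℕ → Fin n → ℝ) (hR0 : R 0 = 0)
    (hx : ∀ t ∈ Icc 1 T, x t = nmz (R (t - 1)))
    (hr : ∀ t ∈ Icc 1 T, r t = fun i => dotp (l t) (x t) - l t i)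
    (hR : ∀ t ∈ Icc 1 T, R t = clipPos (fun i => R (t - 1) i + w t * r t i))
    (x' : Fin n → ℝ) (hx' : x' ∈ stdSimplex ℝ (Fin n)) :
    ∑ t ∈ Icc 1 T, τ t * (dotp (l t) (x t) - dotp (l t) x') ≤
      Real.sqrt ((τ 1 / w 1) * ∑ t ∈ Icc 1 T, τ t * w t * ∑ i, (r t i) ^ 2) := by
  have hRn := R_nonneg w R r hR0 hR
  have hstep : ∀ u : Fin n → ℝ, (∀ i, 0 ≤ u i) → ∀ t ∈ Icc 1 T,
      τ t / w t * ∑ i, (R t i - u i) ^ 2 ≤ τ t / w t * ∑ i, (R (t-1) i - u i) ^ 2 +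
        (τ t * w t * ∑ i, r t i ^ 2 - 2 * (τ t * ∑ i, r t i * u i)) := by
    intro u hu t ht
    have hw' := hw t ht
    have hτ' := hτ t ht
    have ho : ∑ i, R (t-1) i * r t i = 0 := by
      rw [hr t ht, hx t ht]
      exact orth hn _ _ (hRn (t-1) (by have := (mem_Icc.1 ht).2; omega))
    have h := step_ineq (R (t-1)) (r t) u (w t) hu ho
    rw [← hR t ht] at h
    have h2 := mul_le_mul_of_nonneg_left h (div_pos hτ' hw').le
    refine h2.trans (le_of_eq ?_)
    field_simp
    ring
  have hmain : ∀ u : Fin n → ℝ, (∀ i, 0 ≤ u i) → ∀ t, 1 ≤ t → t ≤ T →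
      τ t / w t * ∑ i, (R t i - u i) ^ 2 ≤ τ 1 / w 1 * ∑ i, (u i) ^ 2 +
        ∑ s ∈ Icc 1 t, (τ s * w s * ∑ i, r s i ^ 2 - 2 * (τ s * ∑ i, r s i * u i)) := by
    intro u hu t ht
    induction t, ht using Nat.le_induction with
    | base =>
      intro _
      have := hstep u hu 1 (mem_Icc.2 ⟨le_rfl, hT⟩)
      simpa [hR0] using this
    | succ t ht ih =>
      intro h
      have h1 := ih (by omega)
      have h2 := hstep u hu (t+1) (mem_Icc.2 ⟨by omega, h⟩)
      have h3 := mul_le_mul_of_nonneg_right (hmono t ht (by omega))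
        (sum_nonneg (s := univ) fun i _ => sq_nonneg (R t i - u i))
      rw [sum_Icc_succ_top (by omega)]
      simp only [Nat.add_sub_cancel] at h2
      linarith
  have h1T : 1 ∈ Icc 1 T := mem_Icc.2 ⟨le_rfl, hT⟩
  have hα : 0 < τ 1 / w 1 := div_pos (hτ 1 h1T) (hw 1 h1T)
  have hαT : 0 < τ T / w T :=
    div_pos (hτ T (mem_Icc.2 ⟨hT, le_rfl⟩)) (hw T (mem_Icc.2 ⟨hT, le_rfl⟩))
  have hXeq : ∑ t ∈ Icc 1 T, τ t * (dotp (l t) (x t) - dotp (l t) x')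
      = ∑ t ∈ Icc 1 T, τ t * ∑ i, r t i * x' i := by
    refine sum_congr rfl fun t ht => ?_
    rw [hr t ht]
    simp only [sub_mul, sum_sub_distrib, ← mul_sum, hx'.2]
    simp [dotp]
  rw [hXeq]
  set X := ∑ t ∈ Icc 1 T, τ t * ∑ i, r t i * x' i with hX
  set Q := ∑ t ∈ Icc 1 T, τ t * w t * ∑ i, r t i ^ 2 with hQ
  set α := τ 1 / w 1 with hαdef
  rcases le_or_gt X 0 with hX0 | hX0
  · exact hX0.trans (Real.sqrt_nonneg _)
  apply Real.le_sqrt_of_sq_le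
  have hc : 0 ≤ X / α := by positivity
  have h := hmain (fun i => X / α * x' i) (fun i => mul_nonneg hc (hx'.1 i)) T hT le_rfl
  have h0 : 0 ≤ τ T / w T * ∑ i, (R T i - X / α * x' i) ^ 2 :=
    mul_nonneg hαT.le (sum_nonneg fun i _ => sq_nonneg _)
  have hsq : ∑ i, x' i ^ 2 ≤ 1 := by
    rw [← hx'.2]
    refine sum_le_sum fun i _ => ?_
    have h1 : x' i ≤ 1 := by
      rw [← hx'.2]
      exact single_le_sum (f := x') (fun j _ => hx'.1 j) (mem_univ i)
    nlinarith [hx'.1 i]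
  have e1 : ∑ i, (X / α * x' i) ^ 2 = (X / α) ^ 2 * ∑ i, x' i ^ 2 := by
    rw [mul_sum]; exact sum_congr rfl fun i _ => by ring
  have e2 : ∑ s ∈ Icc 1 T, (τ s * w s * ∑ i, r s i ^ 2
      - 2 * (τ s * ∑ i, r s i * (X / α * x' i))) = Q - 2 * (X / α) * X := by
    rw [sum_sub_distrib, hQ]
    congr 1
    conv_rhs => rw [hX, mul_sum]
    refine sum_congr rfl fun s _ => ?_
    have : ∑ i, r s i * (X / α * x' i) = X / α * ∑ i, r s i * x' i := by
      rw [mul_sum]; exact sum_congr rfl fun i _ => by ring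
    rw [this]; ring
  rw [e1, e2] at h
  have h3 : α * ((X / α) ^ 2 * ∑ i, x' i ^ 2) ≤ α * ((X / α) ^ 2 * 1) := by gcongr
  have h4 : 0 ≤ α * ((X / α) ^ 2 * 1) + (Q - 2 * (X / α) * X) := by linarith
  have h5 := mul_nonneg hα.le h4
  have h6 : α * (α * ((X / α) ^ 2 * 1) + (Q - 2 * (X / α) * X)) = α * Q - X ^ 2 := by
    field_simp; ring
  linarith

lemma avg_left {n T : ℕ} (S : ℝ) (τ : ℕ → ℝ) (x : ℕ → Fin n → ℝ) (z : Fin n → ℝ) :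
    dotp (S⁻¹ • ∑ t ∈ Icc 1 T, τ t • x t) z = S⁻¹ * ∑ t ∈ Icc 1 T, τ t * dotp (x t) z := by
  change (S⁻¹ • ∑ t ∈ Icc 1 T, τ t • x t) ⬝ᵥ z = S⁻¹ * ∑ t ∈ Icc 1 T, τ t * (x t ⬝ᵥ z)
  simp [sum_dotProduct, smul_dotProduct]

lemma avg_simplex {n T : ℕ} (τ : ℕ → ℝ) (hτ : ∀ t ∈ Icc 1 T, 0 < τ t)
    (hS : 0 < ∑ t ∈ Icc 1 T, τ t) (x : ℕ → Fin n → ℝ)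
    (hx : ∀ t ∈ Icc 1 T, (∀ i, 0 ≤ x t i) ∧ ∑ i, x t i = 1) :
    ((∑ t ∈ Icc 1 T, τ t)⁻¹ • ∑ t ∈ Icc 1 T, τ t • x t) ∈ stdSimplex ℝ (Fin n) := by
  constructor
  · intro i
    simp only [Pi.smul_apply, Finset.sum_apply, smul_eq_mul]
    exact mul_nonneg (inv_nonneg.2 hS.le)
      (sum_nonneg fun t ht => mul_nonneg (hτ t ht).le ((hx t ht).1 i))
  · simp only [Pi.smul_apply, Finset.sum_apply, smul_eq_mul]
    rw [← mul_sum, sum_comm]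
    simp only [← mul_sum]
    have e : ∑ t ∈ Icc 1 T, τ t * ∑ i, x t i = ∑ t ∈ Icc 1 T, τ t :=
      sum_congr rfl fun t ht => by rw [(hx t ht).2, mul_one]
    rw [e]
    exact inv_mul_cancel₀ hS.ne'

lemma dotp_tr {n m : ℕ} (A : Matrix (Fin n) (Fin m) ℝ) (a : Fin n → ℝ) (b : Fin m → ℝ) :
    dotp (-(Aᵀ.mulVec a)) b = - dotp a (A.mulVec b) := by
  change (-(Aᵀ.mulVec a)) ⬝ᵥ b = -(a ⬝ᵥ (A.mulVec b))
  rw [neg_dotProduct, mulVec_transpose, dotProduct_mulVec]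

lemma dotp_tr2 {n m : ℕ} (A : Matrix (Fin n) (Fin m) ℝ) (a : Fin n → ℝ) (b : Fin m → ℝ) :
    dotp a (A.mulVec b) = dotp b (Aᵀ.mulVec a) := by
  change a ⬝ᵥ (A.mulVec b) = b ⬝ᵥ (Aᵀ.mulVec a)
  rw [mulVec_transpose, dotProduct_mulVec, dotProduct_comm]

lemma dotp_comm' {n : ℕ} (a b : Fin n → ℝ) : dotp a b = dotp b a := dotProduct_comm a b

/-- Theorem 3 of the paper instantiated on a two-player zero-sum normal-form game with
loss matrix `A`: if both players run WCFR+ with weights `w` for regrets and `τ` for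
average strategies (`τᵗ/wᵗ` non-increasing), the `τ`-weighted average strategy profile
`(x̄, ȳ)` is an `ε`-Nash equilibrium with
`ε = (√((τ¹/w¹)Σ τᵗwᵗ‖r_xᵗ‖₂²) + √((τ¹/w¹)Σ τᵗwᵗ‖r_yᵗ‖₂²))/(Σ τᵗ)`. -/
theorem stmt13 (n m T : ℕ) (hn : 0 < n) (hm : 0 < m) (hT : 1 ≤ T)
    (A : Matrix (Fin n) (Fin m) ℝ)
    (w τ : ℕ → ℝ)
    (hw : ∀ t ∈ Icc 1 T, 0 < w t) (hτ : ∀ t ∈ Icc 1 T, 0 < τ t)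
    (hmono : ∀ t, 1 ≤ t → t < T → τ (t + 1) / w (t + 1) ≤ τ t / w t)
    (Rx : ℕ → Fin n → ℝ) (Ry : ℕ → Fin m → ℝ)
    (x rx : ℕ → Fin n → ℝ) (y ry : ℕ → Fin m → ℝ)
    (ℓx : ℕ → Fin n → ℝ) (ℓy : ℕ → Fin m → ℝ)
    (hRx0 : Rx 0 = 0) (hRy0 : Ry 0 = 0)
    (hx : ∀ t ∈ Icc 1 T, x t = nmz (Rx (t - 1)))
    (hy : ∀ t ∈ Icc 1 T, y t = nmz (Ry (t - 1)))
    (hℓx : ∀ t ∈ Icc 1 T, ℓx t = A.mulVec (y t))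
    (hℓy : ∀ t ∈ Icc 1 T, ℓy t = -(Aᵀ.mulVec (x t)))
    (hrx : ∀ t ∈ Icc 1 T, rx t = fun i => dotp (ℓx t) (x t) - ℓx t i)
    (hry : ∀ t ∈ Icc 1 T, ry t = fun j => dotp (ℓy t) (y t) - ℓy t j)
    (hRx : ∀ t ∈ Icc 1 T, Rx t = clipPos (fun i => Rx (t - 1) i + w t * rx t i))
    (hRy : ∀ t ∈ Icc 1 T, Ry t = clipPos (fun j => Ry (t - 1) j + w t * ry t j)) :
    let S : ℝ := ∑ t ∈ Icc 1 T, τ t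
    let xbar : Fin n → ℝ := S⁻¹ • ∑ t ∈ Icc 1 T, τ t • x t
    let ybar : Fin m → ℝ := S⁻¹ • ∑ t ∈ Icc 1 T, τ t • y t
    let ε : ℝ :=
      (Real.sqrt ((τ 1 / w 1) * ∑ t ∈ Icc 1 T, τ t * w t * ∑ i, (rx t i) ^ 2)
        + Real.sqrt ((τ 1 / w 1) * ∑ t ∈ Icc 1 T, τ t * w t * ∑ j, (ry t j) ^ 2)) / S
    (∀ x' ∈ stdSimplex ℝ (Fin n),
      dotp xbar (A.mulVec ybar) - dotp x' (A.mulVec ybar) ≤ ε) ∧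
    (∀ y' ∈ stdSimplex ℝ (Fin m),
      dotp xbar (A.mulVec y') - dotp xbar (A.mulVec ybar) ≤ ε) := by
  intro S xbar ybar ε
  have hS : 0 < S := sum_pos hτ ⟨1, mem_Icc.2 ⟨le_rfl, hT⟩⟩
  have hRxn := R_nonneg w Rx rx hRx0 hRx
  have hRyn := R_nonneg w Ry ry hRy0 hRy
  have hxb : xbar ∈ stdSimplex ℝ (Fin n) := avg_simplex τ hτ hS x fun t ht => by
    rw [hx t ht]
    exact nmz_simplex hn _ (hRxn (t-1) (by have := (mem_Icc.1 ht).2; omega))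
  have hyb : ybar ∈ stdSimplex ℝ (Fin m) := avg_simplex τ hτ hS y fun t ht => by
    rw [hy t ht]
    exact nmz_simplex hm _ (hRyn (t-1) (by have := (mem_Icc.1 ht).2; omega))
  have ax : ∀ y', ∑ t ∈ Icc 1 T, τ t * dotp (x t) (A.mulVec y')
      = S * dotp xbar (A.mulVec y') := by
    intro y'
    rw [avg_left, ← mul_assoc, mul_inv_cancel₀ hS.ne', one_mul]
  have ay : ∀ x', ∑ t ∈ Icc 1 T, τ t * dotp x' (A.mulVec (y t))
      = S * dotp x' (A.mulVec ybar) := by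
    intro x'
    rw [dotp_tr2, avg_left, ← mul_assoc, mul_inv_cancel₀ hS.ne', one_mul]
    exact sum_congr rfl fun t _ => by rw [dotp_tr2]
  have key : ∀ x' ∈ stdSimplex ℝ (Fin n), ∀ y' ∈ stdSimplex ℝ (Fin m),
      S * (dotp xbar (A.mulVec y') - dotp x' (A.mulVec ybar)) ≤ S * ε := by
    intro x' hx' y' hy'
    have h1 := regret hn hT w τ hw hτ hmono Rx x rx ℓx hRx0 hx hrx hRx x' hx'
    have h2 := regret hm hT w τ hw hτ hmono Ry y ry ℓy hRy0 hy hry hRy y' hy'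
    have e1 : ∑ t ∈ Icc 1 T, τ t * (dotp (ℓx t) (x t) - dotp (ℓx t) x')
        = ∑ t ∈ Icc 1 T, τ t * dotp (x t) (A.mulVec (y t)) - S * dotp x' (A.mulVec ybar) := by
      rw [← ay, ← sum_sub_distrib]
      refine sum_congr rfl fun t ht => ?_
      rw [hℓx t ht, dotp_comm' _ (x t), dotp_comm' _ x', mul_sub]
    have e2 : ∑ t ∈ Icc 1 T, τ t * (dotp (ℓy t) (y t) - dotp (ℓy t) y')
        = S * dotp xbar (A.mulVec y') - ∑ t ∈ Icc 1 T, τ t * dotp (x t) (A.mulVec (y t)) := by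
      rw [← ax, ← sum_sub_distrib]
      refine sum_congr rfl fun t ht => ?_
      rw [hℓy t ht, dotp_tr, dotp_tr]
      ring
    rw [e1] at h1
    rw [e2] at h2
    have e3 : S * ε = _ := mul_div_cancel₀ _ hS.ne'
    rw [e3]
    linarith
  exact ⟨fun x' hx' => le_of_mul_le_mul_left (key x' hx' ybar hyb) hS,
    fun y' hy' => le_of_mul_le_mul_left (key xbar hxb y' hy') hS⟩
end
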